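/- Let K be a convex body in ℝⁿ (a nonempty, compact, convex set with nonempty interior). The Lebesgue measure of K equals the Lebesgue measure of its central symmetrization (1/2) • (K + (-K)) if and only if K is centrally symmetric with respect to some point p ∈ ℝⁿ, i.e., there exists p such that for all x, x ∈ K if and only if 2p - x ∈ K. -/

import Mathlib

open scoped Pointwise

open MeasureTheory

theorem oneDim_BM {A B C : Set ℝ} (hA : MeasurableSet A) (hB : MeasurableSet B)
    (hA0 : A.Nonempty) (hB0 : B.Nonempty)
    (h : ∀ x ∈ A, ∀ y ∈ B, (1/2 : ℝ) * (x + y) ∈ C) :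
    volume A + volume B ≤ 2 * volume C := by
  have key : ∀ A' B' : Set ℝ, IsCompact A' → IsCompact B' → A' ⊆ A → B' ⊆ B →
      A'.Nonempty → B'.Nonempty → volume A' + volume B' ≤ 2 * volume C := by
    intro A' B' cA cB sA sB nA nB
    obtain ⟨a, ha, hamax⟩ := cA.exists_isGreatest nA
    obtain ⟨b, hb, hbmin⟩ := cB.exists_isLeast nB
    set S : Set ℝ := (fun x => x - b) ⁻¹' A' with hS
    set T : Set ℝ := (fun x => x - a) ⁻¹' B' with hT
    have hSv : volume S = volume A' := by
      simp [hS, sub_eq_add_neg]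
    have hTv : volume T = volume B' := by
      simp [hT, sub_eq_add_neg]
    have hTm : MeasurableSet T := cB.measurableSet.preimage (by fun_prop)
    have hint : volume (S ∩ T) = 0 := by
      refine measure_mono_null (t := {a + b}) ?_ (by simp)
      rintro x ⟨h1, h2⟩
      have h3 := hamax h1
      have h4 := hbmin h2
      simp only [Set.mem_singleton_iff]
      simp only at h3 h4
      linarith
    have hU : volume (S ∪ T) = volume A' + volume B' := by
      have := measure_union_add_inter (μ := volume) S hTm
      rw [hint, add_zero, hSv, hTv] at this
      exact this
    have hsub : S ∪ T ⊆ (fun x => (1/2 : ℝ) * x) ⁻¹' C := by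
      rintro x (hx | hx)
      · have := h _ (sA hx) _ (sB hb)
        simpa using this
      · have := h _ (sA ha) _ (sB hx)
        simpa using this
    calc volume A' + volume B' = volume (S ∪ T) := hU.symm
      _ ≤ _ := measure_mono hsub
      _ = 2 * volume C := by
        rw [Real.volume_preimage_mul_left (by norm_num)]
        norm_num
  obtain ⟨a0, ha0⟩ := hA0
  obtain ⟨b0, hb0⟩ := hB0
  rw [hA.measure_eq_iSup_isCompact, hB.measure_eq_iSup_isCompact]
  simp only [iSup_and']
  refine ENNReal.biSup_add_biSup_le' (p := fun K => K ⊆ A ∧ IsCompact K)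
    (q := fun K => K ⊆ B ∧ IsCompact K) ⟨∅, by simp⟩ ⟨∅, by simp⟩ ?_
  rintro A' ⟨sA, cA⟩ B' ⟨sB, cB⟩
  refine le_trans ?_ (key (insert a0 A') (insert b0 B') (cA.insert a0) (cB.insert b0)
    (Set.insert_subset ha0 sA) (Set.insert_subset hb0 sB) (by simp) (by simp))
  gcongr <;> simp

theorem amgm_ennreal (x y : ENNReal) : 4 * (x * y) ≤ (x + y) ^ 2 := by
  rcases eq_or_ne x ⊤ with rfl | hx
  · simp
  rcases eq_or_ne y ⊤ with rfl | hy
  · simp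
  lift x to NNReal using hx
  lift y to NNReal using hy
  norm_cast
  rw [← NNReal.coe_le_coe]
  push_cast
  nlinarith [sq_nonneg ((x:ℝ) - y)]

theorem oneDim_PL_norm {f g h : ℝ → ℝ} (hf : Measurable f) (hg : Measurable g) (hh : Measurable h)
    (f0 : ∀ x, 0 ≤ f x) (g0 : ∀ x, 0 ≤ g x) (h0 : ∀ x, 0 ≤ h x)
    (f1 : ∀ x, f x ≤ 1) (g1 : ∀ x, g x ≤ 1)
    (fs : ∀ t < 1, ∃ x, t < f x) (gs : ∀ t < 1, ∃ x, t < g x)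
    (H : ∀ x y, f x * g y ≤ h ((1/2 : ℝ) * (x + y)) ^ 2) :
    (∫⁻ x, ENNReal.ofReal (f x)) + (∫⁻ x, ENNReal.ofReal (g x)) ≤
      2 * ∫⁻ x, ENNReal.ofReal (h x) := by
  rw [lintegral_eq_lintegral_meas_lt _ (.of_forall f0) hf.aemeasurable,
    lintegral_eq_lintegral_meas_lt _ (.of_forall g0) hg.aemeasurable,
    lintegral_eq_lintegral_meas_lt _ (.of_forall h0) hh.aemeasurable,
    ← lintegral_const_mul' _ _ (by norm_num), ← lintegral_add_left']
  · refine setLIntegral_mono' measurableSet_Ioi fun t ht => ?_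
    simp only [Set.mem_Ioi] at ht
    by_cases ht1 : t < 1
    · apply oneDim_BM (measurableSet_lt measurable_const hf) (measurableSet_lt measurable_const hg)
        (fs t ht1) (gs t ht1)
      intro x hx y hy
      change t < f x at hx
      change t < g y at hy
      change t < h _
      refine lt_of_pow_lt_pow_left₀ 2 (h0 _) (lt_of_lt_of_le ?_ (H x y))
      nlinarith
    · have e1 : {a | t < f a} = ∅ := by
        ext x; simp; linarith [f1 x]
      have e2 : {a | t < g a} = ∅ := by
        ext x; simp; linarith [g1 x]
      simp [e1, e2]
  · have : Antitone fun t => volume {a | t < f a} := fun s t hst =>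
      measure_mono fun x hx => lt_of_le_of_lt hst hx
    exact this.measurable.aemeasurable

theorem oneDim_PL_bdd {f g h : ℝ → ℝ} (hf : Measurable f) (hg : Measurable g) (hh : Measurable h)
    (f0 : ∀ x, 0 ≤ f x) (g0 : ∀ x, 0 ≤ g x) (h0 : ∀ x, 0 ≤ h x) (k : ℝ)
    (f1 : ∀ x, f x ≤ k) (g1 : ∀ x, g x ≤ k)
    (H : ∀ x y, f x * g y ≤ h ((1/2 : ℝ) * (x + y)) ^ 2) :
    (∫⁻ x, ENNReal.ofReal (f x)) * (∫⁻ x, ENNReal.ofReal (g x)) ≤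
      (∫⁻ x, ENNReal.ofReal (h x)) ^ 2 := by
  have bf : BddAbove (Set.range f) := ⟨k, by rintro _ ⟨x, rfl⟩; exact f1 x⟩
  have bg : BddAbove (Set.range g) := ⟨k, by rintro _ ⟨x, rfl⟩; exact g1 x⟩
  set a := ⨆ x, f x with ha
  set b := ⨆ x, g x with hb
  have fa : ∀ x, f x ≤ a := fun x => le_ciSup bf x
  have gb : ∀ x, g x ≤ b := fun x => le_ciSup bg x
  rcases (le_trans (f0 0) (fa 0)).eq_or_lt with h1 | a0
  · have : ∀ x, f x = 0 := fun x => le_antisymm (h1 ▸ fa x) (f0 x)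
    simp [this]
  rcases (le_trans (g0 0) (gb 0)).eq_or_lt with h1 | b0
  · have : ∀ x, g x = 0 := fun x => le_antisymm (h1 ▸ gb x) (g0 x)
    simp [this]
  set c := Real.sqrt (a * b) with hc
  have c0 : 0 < c := Real.sqrt_pos.2 (mul_pos a0 b0)
  have c2 : c ^ 2 = a * b := Real.sq_sqrt (mul_pos a0 b0).le
  have key := oneDim_PL_norm (f := fun x => a⁻¹ * f x) (g := fun x => b⁻¹ * g x)
    (h := fun x => c⁻¹ * h x) (by fun_prop) (by fun_prop) (by fun_prop)
    (fun x => mul_nonneg (inv_pos.2 a0).le (f0 x))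
    (fun x => mul_nonneg (inv_pos.2 b0).le (g0 x))
    (fun x => mul_nonneg (inv_pos.2 c0).le (h0 x))
    (fun x => by rw [inv_mul_le_iff₀ a0]; simpa using fa x)
    (fun x => by rw [inv_mul_le_iff₀ b0]; simpa using gb x)
    (fun t ht => by
      obtain ⟨x, hx⟩ := exists_lt_of_lt_ciSup (show a * t < ⨆ x, f x by rw [← ha]; nlinarith)
      exact ⟨x, by rw [lt_inv_mul_iff₀ a0]; exact hx⟩)
    (fun t ht => by
      obtain ⟨x, hx⟩ := exists_lt_of_lt_ciSup (show b * t < ⨆ x, g x by rw [← hb]; nlinarith)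
      exact ⟨x, by rw [lt_inv_mul_iff₀ b0]; exact hx⟩)
    (fun x y => by
      rw [mul_pow, inv_pow, c2, mul_inv]
      have := mul_le_mul_of_nonneg_left (H x y) (mul_pos (inv_pos.2 a0) (inv_pos.2 b0)).le
      linarith)
  have e : ∀ (r : ℝ) (hr : 0 < r) (φ : ℝ → ℝ), ∫⁻ x, ENNReal.ofReal (φ x) =
      ENNReal.ofReal r * ∫⁻ x, ENNReal.ofReal (r⁻¹ * φ x) := by
    intro r hr φ
    rw [← lintegral_const_mul' _ _ ENNReal.ofReal_ne_top]
    congr 1; ext x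
    rw [← ENNReal.ofReal_mul hr.le, mul_inv_cancel_left₀ hr.ne']
  rw [e a a0 f, e b b0 g, e c c0 h]
  set X := ∫⁻ x, ENNReal.ofReal (a⁻¹ * f x)
  set Y := ∫⁻ x, ENNReal.ofReal (b⁻¹ * g x)
  set Z := ∫⁻ x, ENNReal.ofReal (c⁻¹ * h x)
  have h4 : X * Y ≤ Z ^ 2 := by
    have h5 : 4 * (X * Y) ≤ 4 * Z ^ 2 := by
      calc 4 * (X * Y) ≤ (X + Y) ^ 2 := amgm_ennreal X Y
        _ ≤ (2 * Z) ^ 2 := by gcongr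
        _ = 4 * Z ^ 2 := by rw [mul_pow]; norm_num
    exact (ENNReal.mul_le_mul_iff_right (by norm_num) (by norm_num)).1 h5
  calc ENNReal.ofReal a * X * (ENNReal.ofReal b * Y)
      = ENNReal.ofReal (a * b) * (X * Y) := by rw [ENNReal.ofReal_mul a0.le]; ring
    _ ≤ ENNReal.ofReal (a * b) * Z ^ 2 := by gcongr
    _ = _ := by rw [mul_pow, ← c2, ENNReal.ofReal_pow c0.le]

/-- The midpoint Prekopa-Leindler inequality for a measure. -/
def PLProp {E : Type*} [AddCommGroup E] [Module ℝ E] [MeasurableSpace E] (μ : Measure E) : Prop :=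
  ∀ f g h : E → ENNReal, Measurable f → Measurable g → Measurable h →
    (∀ x y, f x * g y ≤ h ((1/2 : ℝ) • (x + y)) ^ 2) →
    (∫⁻ x, f x ∂μ) * (∫⁻ x, g x ∂μ) ≤ (∫⁻ x, h x ∂μ) ^ 2

theorem PLProp.real : PLProp (volume : Measure ℝ) := by
  intro f g h hf hg hh H
  have lim : ∀ φ : ℝ → ENNReal, Measurable φ →
      ∫⁻ x, φ x = ⨆ k : ℕ, ∫⁻ x, min (φ x) k := by
    intro φ hφ
    rw [← lintegral_iSup (fun k => hφ.min measurable_const)]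
    · congr 1; ext x
      apply le_antisymm
      · rcases eq_or_ne (φ x) ⊤ with h | h
        · simp [h, ENNReal.iSup_natCast]
        · obtain ⟨k, hk⟩ := ENNReal.exists_nat_gt h
          exact le_iSup_of_le k (by simp [hk.le])
      · exact iSup_le fun k => min_le_left _ _
    · intro i j hij x
      exact min_le_min le_rfl (by exact_mod_cast hij)
  have tr : ∀ k : ℕ, (∫⁻ x, min (f x) k) * (∫⁻ x, min (g x) k) ≤ (∫⁻ x, h x) ^ 2 := by
    intro k
    have fin : ∀ z : ENNReal, min z (k : ENNReal) ≠ ⊤ := fun z =>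
      ne_top_of_le_ne_top (ENNReal.natCast_ne_top k) (min_le_right _ _)
    have bd : ∀ z : ENNReal, (min z (k : ENNReal)).toReal ≤ k := fun z => by
      have := ENNReal.toReal_mono (ENNReal.natCast_ne_top k) (min_le_right z (k : ENNReal))
      simpa using this
    have := oneDim_PL_bdd (f := fun x => (min (f x) k).toReal) (g := fun x => (min (g x) k).toReal)
      (h := fun x => (min (h x) k).toReal) (by fun_prop) (by fun_prop) (by fun_prop)
      (fun x => ENNReal.toReal_nonneg) (fun x => ENNReal.toReal_nonneg)
      (fun x => ENNReal.toReal_nonneg) k (fun x => bd _) (fun x => bd _)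
      (fun x y => by
        rw [← ENNReal.toReal_mul, ← ENNReal.toReal_pow]
        refine ENNReal.toReal_mono (ENNReal.pow_ne_top (fin _)) ?_
        rcases le_total (h ((1/2 : ℝ) * (x + y))) k with hk | hk
        · rw [min_eq_left hk]
          exact le_trans (mul_le_mul' (min_le_left _ _) (min_le_left _ _)) (H x y)
        · rw [min_eq_right hk, sq]
          exact mul_le_mul' (min_le_right _ _) (min_le_right _ _))
    simp only [ENNReal.ofReal_toReal (fin _)] at this
    refine this.trans ?_
    gcongr
    exact min_le_left _ _
  rw [lim f hf, lim g hg, ENNReal.iSup_mul]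
  refine iSup_le fun i => ?_
  rw [ENNReal.mul_iSup]
  refine iSup_le fun j => ?_
  refine le_trans ?_ (tr (max i j))
  gcongr <;> simp

theorem PLProp.prod {E F : Type*} [AddCommGroup E] [Module ℝ E] [MeasurableSpace E]
    [AddCommGroup F] [Module ℝ F] [MeasurableSpace F] {μ : Measure E} {ν : Measure F}
    [SFinite μ] [SFinite ν] (h1 : PLProp μ) (h2 : PLProp ν) : PLProp (μ.prod ν) := by
  intro f g h hf hg hh H
  rw [lintegral_prod _ hf.aemeasurable, lintegral_prod _ hg.aemeasurable,
    lintegral_prod _ hh.aemeasurable]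
  apply h1 _ _ _ hf.lintegral_prod_right' hg.lintegral_prod_right' hh.lintegral_prod_right'
  intro x y
  apply h2 _ _ _ (by fun_prop) (by fun_prop) (by fun_prop)
  intro u v
  exact H (x, u) (y, v)

theorem PLProp.transfer {E F : Type*} [AddCommGroup E] [Module ℝ E] [MeasurableSpace E]
    [AddCommGroup F] [Module ℝ F] [MeasurableSpace F] {μ : Measure E} {ν : Measure F}
    (h1 : PLProp μ) (e : E → F) (he : MeasurePreserving e μ ν)
    (hl : ∀ x y, e ((1/2 : ℝ) • (x + y)) = (1/2 : ℝ) • (e x + e y)) : PLProp ν := by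
  intro f g h hf hg hh H
  rw [← he.lintegral_comp hf, ← he.lintegral_comp hg, ← he.lintegral_comp hh]
  apply h1 _ _ _ (hf.comp he.measurable) (hg.comp he.measurable) (hh.comp he.measurable)
  intro x y
  simp only [Function.comp, hl]
  exact H _ _

theorem PLProp.pi (n : ℕ) : PLProp (volume : Measure (Fin n → ℝ)) := by
  induction n with
  | zero =>
    intro f g h hf hg hh H
    rw [volume_pi, Measure.pi_of_empty _ (x := 0)]
    simp only [lintegral_dirac]
    have := H 0 0
    simpa using this
  | succ n ih =>
    refine (PLProp.real.prod ih).transfer _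
      (volume_preserving_piFinSuccAbove (fun _ : Fin (n+1) => ℝ) 0).symm ?_
    intro x y
    ext i
    refine Fin.cases ?_ (fun j => ?_) i <;> simp [MeasurableEquiv.piFinSuccAbove, mul_add]

theorem PLProp.euclidean (n : ℕ) : PLProp (volume : Measure (EuclideanSpace ℝ (Fin n))) :=
  (PLProp.pi n).transfer _ (PiLp.volume_preserving_toLp (Fin n)) (fun _ _ => rfl)


theorem PL_compact {n : ℕ} {K L M : Set (EuclideanSpace ℝ (Fin n))}
    (cK : IsCompact K) (cL : IsCompact L) (cM : IsCompact M)
    (hM : ∀ x ∈ K, ∀ y ∈ L, (1/2 : ℝ) • (x + y) ∈ M)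
    {f g h : EuclideanSpace ℝ (Fin n) → ℝ} (hf : Continuous f) (hg : Continuous g)
    (hh : Continuous h) (f0 : ∀ x ∈ K, 0 ≤ f x) (g0 : ∀ x ∈ L, 0 ≤ g x) (h0 : ∀ x ∈ M, 0 ≤ h x)
    (H : ∀ x ∈ K, ∀ y ∈ L, f x * g y ≤ h ((1/2 : ℝ) • (x + y)) ^ 2) :
    (∫ x in K, f x) * (∫ x in L, g x) ≤ (∫ x in M, h x) ^ 2 := by
  have conv : ∀ (S : Set (EuclideanSpace ℝ (Fin n))) (φ : EuclideanSpace ℝ (Fin n) → ℝ),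
      IsCompact S → Continuous φ → (∀ x ∈ S, 0 ≤ φ x) →
      ∫⁻ x, S.indicator (fun x => ENNReal.ofReal (φ x)) x = ENNReal.ofReal (∫ x in S, φ x) := by
    intro S φ cS hφ φ0
    rw [lintegral_indicator cS.measurableSet, ofReal_integral_eq_lintegral_ofReal]
    · exact hφ.continuousOn.integrableOn_compact cS
    · exact (ae_restrict_iff' cS.measurableSet).2 (.of_forall φ0)
  have nn : 0 ≤ ∫ x in M, h x := setIntegral_nonneg cM.measurableSet h0
  have nf : 0 ≤ ∫ x in K, f x := setIntegral_nonneg cK.measurableSet f0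
  have key := PLProp.euclidean n (K.indicator (fun x => ENNReal.ofReal (f x)))
    (L.indicator (fun x => ENNReal.ofReal (g x))) (M.indicator (fun x => ENNReal.ofReal (h x)))
    (Measurable.indicator (by fun_prop) cK.measurableSet)
    (Measurable.indicator (by fun_prop) cL.measurableSet)
    (Measurable.indicator (by fun_prop) cM.measurableSet) (by
      intro x y
      by_cases hx : x ∈ K
      · by_cases hy : y ∈ L
        · rw [Set.indicator_of_mem hx, Set.indicator_of_mem hy, Set.indicator_of_mem (hM x hx y hy),
            ← ENNReal.ofReal_mul (f0 x hx), ← ENNReal.ofReal_pow (h0 _ (hM x hx y hy))]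
          exact ENNReal.ofReal_le_ofReal (H x hx y hy)
        · simp [hy]
      · simp [hx])
  rw [conv K f cK hf f0, conv L g cL hg g0, conv M h cM hh h0, ← ENNReal.ofReal_mul nf,
    ← ENNReal.ofReal_pow nn] at key
  exact (ENNReal.ofReal_le_ofReal_iff (by positivity)).1 key

theorem setIntegral_neg_set {n : ℕ} (K : Set (EuclideanSpace ℝ (Fin n)))
    (φ : EuclideanSpace ℝ (Fin n) → ℝ) :
    ∫ x in -K, φ x = ∫ x in K, φ (-x) := by
  have := (Measure.measurePreserving_neg (volume : Measure (EuclideanSpace ℝ (Fin n)))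
    ).setIntegral_preimage_emb (MeasurableEquiv.neg _).measurableEmbedding φ (-K)
  rw [← this]
  simp

section centered
variable {n : ℕ} {K M : Set (EuclideanSpace ℝ (Fin n))}

theorem second_moment_coord (cK : IsCompact K) (cM : IsCompact M) (sM : -M = M)
    (hM : ∀ x ∈ K, ∀ y ∈ -K, (1/2 : ℝ) • (x + y) ∈ M)
    (hV : volume K = volume M) (i : Fin n) (hc : ∫ x in K, x i = 0) :
    ∫ x in K, (x i) ^ 2 ≤ ∫ x in M, (x i) ^ 2 := by
  have bdd : ∃ ε : ℝ, 0 < ε ∧ ∀ x ∈ K ∪ M, |ε * x i| ≤ 1 := by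
    obtain ⟨R, hR⟩ := (cK.union cM).isBounded.exists_norm_le
    refine ⟨(|R| + 1)⁻¹, by positivity, fun x hx => ?_⟩
    rw [abs_mul, abs_of_pos (by positivity), inv_mul_le_iff₀ (by positivity)]
    have := PiLp.norm_apply_le x i
    rw [Real.norm_eq_abs] at this
    linarith [hR x hx, le_abs_self R]
  obtain ⟨ε, ε0, hε⟩ := bdd
  have ci : Continuous fun x : EuclideanSpace ℝ (Fin n) => x i := by fun_prop
  have bK : ∀ x ∈ K, |ε * x i| ≤ 1 := fun x hx => hε x (Or.inl hx)
  have bL : ∀ x ∈ -K, |ε * x i| ≤ 1 := fun x hx => by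
    have := bK (-x) hx
    simpa using this
  have bM : ∀ x ∈ M, |ε * x i| ≤ 1 := fun x hx => hε x (Or.inr hx)
  have key := PL_compact cK cK.neg cM hM (f := fun x => (1 + ε * x i) ^ 2)
    (g := fun x => (1 + ε * x i) ^ 2) (h := fun x => (1 + ε * x i) ^ 2)
    (by fun_prop) (by fun_prop) (by fun_prop)
    (fun _ _ => sq_nonneg _) (fun _ _ => sq_nonneg _) (fun _ _ => sq_nonneg _) (by
      intro x hx y hy
      rw [← mul_pow]
      have h1 := abs_le.1 (bK x hx)
      have h2 := abs_le.1 (bL y hy)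
      refine pow_le_pow_left₀ (mul_nonneg (by linarith) (by linarith)) ?_ 2
      simp only [PiLp.smul_apply, PiLp.add_apply, smul_eq_mul]
      nlinarith [sq_nonneg (ε * x i - ε * y i)])
  have expand : ∀ (S : Set (EuclideanSpace ℝ (Fin n))) (e : ℝ), IsCompact S →
      ∫ x in S, (1 + e * x i) ^ 2 = volume.real S + 2 * e * (∫ x in S, x i)
        + e ^ 2 * ∫ x in S, (x i) ^ 2 := by
    intro S e cS
    have i0 : IntegrableOn (fun _ : EuclideanSpace ℝ (Fin n) => (1:ℝ)) S :=
      continuous_const.continuousOn.integrableOn_compact cS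
    have i1 : IntegrableOn (fun x : EuclideanSpace ℝ (Fin n) => 2 * e * x i) S :=
      (by fun_prop : Continuous fun x : EuclideanSpace ℝ (Fin n) => 2 * e * x i
        ).continuousOn.integrableOn_compact cS
    have i2 : IntegrableOn (fun x : EuclideanSpace ℝ (Fin n) => e ^ 2 * (x i) ^ 2) S :=
      (by fun_prop : Continuous fun x : EuclideanSpace ℝ (Fin n) => e ^ 2 * (x i) ^ 2
        ).continuousOn.integrableOn_compact cS
    rw [← integral_const_mul, ← integral_const_mul]
    have : volume.real S = ∫ x in S, (1:ℝ) := by simp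
    have i01 : IntegrableOn (fun x : EuclideanSpace ℝ (Fin n) => 1 + 2 * e * x i) S := i0.add i1
    rw [this, ← integral_add i0 i1, ← integral_add i01 i2]
    congr 1; ext x; ring
  have mM : ∫ x in M, x i = 0 := by
    have h1 := setIntegral_neg_set M (fun x => x i)
    rw [sM] at h1
    simp only [PiLp.neg_apply, integral_neg] at h1
    linarith
  have eL : ∫ x in -K, (1 + ε * x i) ^ 2 = ∫ x in K, (1 + (-ε) * x i) ^ 2 := by
    rw [setIntegral_neg_set]
    simp
  rw [eL, expand K _ cK, expand K _ cK, expand M _ cM, hc, mM] at key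
  have hv : volume.real M = volume.real K := by simp [measureReal_def, hV]
  rw [hv] at key
  have p1 : 0 ≤ ∫ x in M, (x i) ^ 2 := integral_nonneg fun _ => sq_nonneg _
  have p2 : 0 ≤ volume.real K := measureReal_nonneg
  have : volume.real K + ε ^ 2 * (∫ x in K, (x i) ^ 2) ≤
      volume.real K + ε ^ 2 * (∫ x in M, (x i) ^ 2) := by
    refine le_of_sq_le_sq ?_ (by positivity)
    nlinarith
  have := (mul_le_mul_iff_right₀ (pow_pos ε0 2)).1 (by linarith :
    ε ^ 2 * (∫ x in K, (x i) ^ 2) ≤ ε ^ 2 * (∫ x in M, (x i) ^ 2))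
  exact this

theorem second_moment (cK : IsCompact K) (cM : IsCompact M) (sM : -M = M)
    (hM : ∀ x ∈ K, ∀ y ∈ -K, (1/2 : ℝ) • (x + y) ∈ M)
    (hV : volume K = volume M) (hc : ∀ i, ∫ x in K, x i = 0) :
    ∫ x in K, ‖x‖ ^ 2 ≤ ∫ x in M, ‖x‖ ^ 2 := by
  simp only [EuclideanSpace.real_norm_sq_eq]
  rw [integral_finsetSum, integral_finsetSum]
  · exact Finset.sum_le_sum fun i _ => second_moment_coord cK cM sM hM hV i (hc i)
  · exact fun i _ => (by fun_prop : Continuous fun x : EuclideanSpace ℝ (Fin n) => (x i) ^ 2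
        ).continuousOn.integrableOn_compact cM
  · exact fun i _ => (by fun_prop : Continuous fun x : EuclideanSpace ℝ (Fin n) => (x i) ^ 2
        ).continuousOn.integrableOn_compact cK

/-- First-order consequence of the equality of volumes. -/
theorem first_order {L : Set (EuclideanSpace ℝ (Fin n))}
    (cK : IsCompact K) (cL : IsCompact L) (cM : IsCompact M)
    (hM : ∀ x ∈ K, ∀ y ∈ L, (1/2 : ℝ) • (x + y) ∈ M)
    (hVK : volume.real K = volume.real M) (hVL : volume.real L = volume.real M)
    (hV0 : 0 < volume.real M)
    {a b c : EuclideanSpace ℝ (Fin n) → ℝ} (ha : Continuous a) (hb : Continuous b)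
    (hc : Continuous c)
    (H : ∀ x ∈ K, ∀ y ∈ L, 2 * c ((1/2 : ℝ) • (x + y)) ≤ a x + b y) :
    2 * ∫ x in M, c x ≤ (∫ x in K, a x) + ∫ x in L, b x := by
  have bd : ∀ (S : Set (EuclideanSpace ℝ (Fin n))) (φ : EuclideanSpace ℝ (Fin n) → ℝ),
      IsCompact S → Continuous φ → ∃ R : ℝ, ∀ x ∈ S, φ x ≤ R := by
    intro S φ cS hφ
    obtain ⟨R, hR⟩ := (cS.image hφ).bddAbove
    exact ⟨R, fun x hx => hR ⟨x, hx, rfl⟩⟩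
  obtain ⟨R1, h1⟩ := bd K a cK ha
  obtain ⟨R2, h2⟩ := bd L b cL hb
  obtain ⟨R3, h3⟩ := bd M c cM hc
  have ex : ∀ (S : Set (EuclideanSpace ℝ (Fin n))) (φ : EuclideanSpace ℝ (Fin n) → ℝ) (C : ℝ),
      IsCompact S → Continuous φ → ∫ x in S, (C - φ x) = C * volume.real S - ∫ x in S, φ x := by
    intro S φ C cS hφ
    rw [integral_sub (continuous_const.continuousOn.integrableOn_compact cS)
      (hφ.continuousOn.integrableOn_compact cS)]
    simp [mul_comm]
  set A := ∫ x in K, a x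
  set B := ∫ x in L, b x
  set m := ∫ x in M, c x
  set V := volume.real M
  have key : ∀ C : ℝ, R1 ≤ C → R2 ≤ C → R3 ≤ C → (C * V - A) * (C * V - B) ≤ (C * V - m) ^ 2 := by
    intro C c1 c2 c3
    have := PL_compact cK cL cM hM (f := fun x => C - a x) (g := fun x => C - b x)
      (h := fun x => C - c x) (by fun_prop) (by fun_prop) (by fun_prop)
      (fun x hx => by linarith [h1 x hx]) (fun x hx => by linarith [h2 x hx])
      (fun x hx => by linarith [h3 x hx]) (by
        intro x hx y hy
        have e1 := H x hx y hy
        have e2 := h1 x hx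
        have e3 := h2 y hy
        have e4 : ((C - a x) + (C - b y)) / 2 ≤ C - c ((1/2 : ℝ) • (x + y)) := by linarith
        have e5 := pow_le_pow_left₀ (by linarith) e4 2
        nlinarith [sq_nonneg (a x - b y)])
    rwa [ex K a C cK ha, ex L b C cL hb, ex M c C cM hc, hVK, hVL] at this
  by_contra hlt
  push Not at hlt
  have hd : 0 < V * (2 * m - A - B) := mul_pos hV0 (by linarith)
  set d := V * (2 * m - A - B)
  set C := |R1| + |R2| + |R3| + (|m ^ 2 - A * B| + 1) / d with hC
  have q : 0 ≤ (|m ^ 2 - A * B| + 1) / d := by positivity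
  have := key C
    (by linarith [le_abs_self R1, abs_nonneg R2, abs_nonneg R3])
    (by linarith [le_abs_self R2, abs_nonneg R1, abs_nonneg R3])
    (by linarith [le_abs_self R3, abs_nonneg R2, abs_nonneg R1])
  have h5 : C * d ≤ m ^ 2 - A * B := by
    have : C * d = C * V * (2 * m - A - B) := by ring
    rw [this]; nlinarith
  have h6 : (|m ^ 2 - A * B| + 1) ≤ C * d := by
    rw [← div_le_iff₀ hd, hC]
    linarith [abs_nonneg R1, abs_nonneg R2, abs_nonneg R3]
  linarith [le_abs_self (m ^ 2 - A * B)]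

theorem centered_symm (cK : IsCompact K) (vK : Convex ℝ K) (iK : (interior K).Nonempty)
    (cM : IsCompact M) (sM : -M = M)
    (hM : ∀ x ∈ K, ∀ y ∈ -K, (1/2 : ℝ) • (x + y) ∈ M)
    (hV : volume K = volume M) (hc : ∀ i, ∫ x in K, x i = 0) : K ⊆ -K := by
  have hVK : volume.real K = volume.real M := by simp [measureReal_def, hV]
  have hVL : volume.real (-K) = volume.real M := by simp [measureReal_def, hV]
  have V0 : 0 < volume.real M := by
    rw [← hVK, measureReal_def]
    exact ENNReal.toReal_pos (Measure.measure_pos_of_nonempty_interior _ iK).ne' cK.measure_lt_top.ne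
  have Kne : K.Nonempty := iK.mono interior_subset
  set g : EuclideanSpace ℝ (Fin n) → ℝ := fun x => Metric.infDist x (-K) with hg
  have cg : Continuous g := Metric.continuous_infDist_pt _
  have g0 : ∀ x, 0 ≤ g x := fun x => Metric.infDist_nonneg
  have gL : ∀ x ∈ -K, g x = 0 := fun x hx => Metric.infDist_zero_of_mem hx
  have int : ∀ (S : Set (EuclideanSpace ℝ (Fin n))) (φ : EuclideanSpace ℝ (Fin n) → ℝ),
      IsCompact S → Continuous φ → IntegrableOn φ S := fun S φ cS hφ =>
    hφ.continuousOn.integrableOn_compact cS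
  have sm := second_moment cK cM sM hM hV hc
  have smL : ∫ x in -K, ‖x‖ ^ 2 = ∫ x in K, ‖x‖ ^ 2 := by
    rw [setIntegral_neg_set]; simp
  have bound : ∀ δ : ℝ, 0 < δ → ∫ x in K, g x ≤ δ / 2 * volume.real M := by
    intro δ δ0
    have := first_order cK cK.neg cM hM hVK hVL V0 (a := fun x => ‖x‖ ^ 2 - δ * g x)
      (b := fun x => ‖x‖ ^ 2 + δ ^ 2 / 2) (c := fun x => ‖x‖ ^ 2)
      (by fun_prop) (by fun_prop) (by fun_prop) (by
        intro x hx y hy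
        have d1 : g x ≤ ‖x - y‖ := by
          rw [← dist_eq_norm]; exact Metric.infDist_le_dist_of_mem hy
        have pl := parallelogram_law_with_norm ℝ x y
        rw [norm_smul, mul_pow]
        norm_num
        nlinarith [sq_nonneg (‖x - y‖ - δ), mul_le_mul_of_nonneg_left d1 δ0.le])
    rw [integral_sub (int _ _ cK (by fun_prop)) (int _ _ cK (by fun_prop)),
      integral_add (int _ _ cK.neg (by fun_prop)) (int _ _ cK.neg (by fun_prop)),
      integral_const_mul, smL] at this
    simp only [integral_const, measureReal_restrict_apply_univ, smul_eq_mul, hVL] at this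
    have h1 : δ * ∫ x in K, g x ≤ δ * (δ / 2 * volume.real M) := by nlinarith
    exact le_of_mul_le_mul_left h1 δ0
  have zero : ∫ x in K, g x = 0 := by
    refine le_antisymm (le_of_forall_pos_le_add fun e he => ?_) (integral_nonneg g0)
    have := bound (2 * e / volume.real M) (by positivity)
    calc _ ≤ _ := this
      _ = 0 + e := by field_simp; ring
  rw [integral_eq_zero_iff_of_nonneg g0 (int K g cK cg)] at zero
  have zi : ∀ x ∈ interior K, g x = 0 := by
    have h1 : g =ᵐ[volume.restrict (interior K)] fun _ => 0 :=
      ae_restrict_of_ae_restrict_of_subset interior_subset zero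
    exact Measure.eqOn_open_of_ae_eq h1 isOpen_interior cg.continuousOn continuousOn_const
  have clos : closure (interior K) = K := by
    rw [vK.closure_interior_eq_closure_of_nonempty_interior iK, cK.isClosed.closure_eq]
  rw [← clos]
  refine closure_minimal (fun x hx => ?_) ?_
  · rw [clos]
    exact (cK.neg.isClosed.mem_iff_infDist_zero (Kne.neg)).2 (zi x hx)
  · rw [clos]; exact cK.neg.isClosed

end centered

/-- **Equality case of the symmetrization inequality**: a convex body `K` in `ℝⁿ`
has the same Lebesgue measure as its central symmetrization `(1/2) • (K + (-K))`
if and only if `K` is centrally symmetric with respect to some point `p`. -/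
theorem volume_eq_volume_central_symmetrization_iff
    {n : ℕ} (K : Set (EuclideanSpace ℝ (Fin n)))
    (hK_ne : K.Nonempty) (hK_cpt : IsCompact K) (hK_conv : Convex ℝ K)
    (hK_int : (interior K).Nonempty) :
    volume K = volume ((2⁻¹ : ℝ) • (K + -K)) ↔
      ∃ p : EuclideanSpace ℝ (Fin n), ∀ x, x ∈ K ↔ (2 : ℝ) • p - x ∈ K := by
  constructor
  · intro hV
    have V0 : 0 < volume.real K :=
      ENNReal.toReal_pos (Measure.measure_pos_of_nonempty_interior _ hK_int).ne' hK_cpt.measure_lt_top.ne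
    set p : EuclideanSpace ℝ (Fin n) :=
      WithLp.toLp 2 (fun i => (volume.real K)⁻¹ * ∫ x in K, x i) with hp
    set K' := (-p) +ᵥ K with hK'
    have mem : ∀ x, x ∈ K' ↔ x + p ∈ K := by
      intro x
      rw [hK', Set.mem_vadd_set_iff_neg_vadd_mem]
      simp [add_comm]
    set M := (2⁻¹ : ℝ) • (K + -K) with hMdef
    have cM : IsCompact M := (hK_cpt.add hK_cpt.neg).smul _
    have sM : -M = M := by
      rw [hMdef, ← Set.smul_set_neg, neg_add, neg_neg, add_comm]
    have hM : ∀ x ∈ K', ∀ y ∈ -K', (1/2 : ℝ) • (x + y) ∈ M := by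
      intro x hx y hy
      rw [mem] at hx
      rw [Set.mem_neg, mem] at hy
      rw [one_div]
      refine Set.smul_mem_smul_set ⟨x + p, hx, y - p, ?_, by simp⟩
      rw [Set.mem_neg]
      convert hy using 1
      abel
    have hc : ∀ i, ∫ x in K', x i = 0 := by
      intro i
      have h1 := (measurePreserving_add_right (volume : Measure (EuclideanSpace ℝ (Fin n))) p
        ).setIntegral_preimage_emb (MeasurableEquiv.addRight p).measurableEmbedding
        (fun x => x i - p i) K
      have h2 : (fun x => x + p) ⁻¹' K = K' := by
        ext x; rw [mem]; rfl
      rw [h2] at h1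
      simp only [PiLp.add_apply, add_sub_cancel_right] at h1
      rw [h1, integral_sub ((by fun_prop : Continuous fun x : EuclideanSpace ℝ (Fin n) => x i
        ).continuousOn.integrableOn_compact hK_cpt)
        (continuous_const.continuousOn.integrableOn_compact hK_cpt)]
      simp only [integral_const, measureReal_restrict_apply_univ, smul_eq_mul, hp]
      rw [mul_inv_cancel_left₀ V0.ne', sub_self]
    have sub := centered_symm (K := K') (M := M) (hK_cpt.vadd _) (hK_conv.vadd _)
      (by rw [hK', interior_vadd]; exact hK_int.vadd_set) cM sM hM
      (by rw [hK', measure_vadd, hV]) hc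
    have fwd : ∀ x ∈ K, (2 : ℝ) • p - x ∈ K := by
      intro x hx
      have h1 : x - p ∈ K' := by rw [mem]; simpa using hx
      have h2 := sub h1
      rw [Set.mem_neg, mem] at h2
      convert h2 using 1
      rw [two_smul]; abel
    refine ⟨p, fun x => ⟨fwd x, fun h => ?_⟩⟩
    simpa using fwd _ h
  · rintro ⟨p, hp⟩
    have : (2⁻¹ : ℝ) • (K + -K) = (-p) +ᵥ K := by
      ext z
      rw [Set.mem_vadd_set_iff_neg_vadd_mem, neg_neg, vadd_eq_add]
      constructor
      · rintro ⟨_, ⟨x, hx, y, hy, rfl⟩, rfl⟩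
        rw [Set.mem_neg, hp] at hy
        have := hK_conv hx hy (a := 2⁻¹) (b := 2⁻¹) (by norm_num) (by norm_num) (by norm_num)
        convert this using 1
        simp only
        module
      · intro hz
        have hz' := (hp _).1 hz
        refine ⟨(p + z) + -((2 : ℝ) • p - (p + z)), ⟨_, hz, _, by simpa using hz', rfl⟩, ?_⟩
        simp only
        module
    rw [this, measure_vadd]
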